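/- Let A and B be bialgebras over a field K in cointeraction via ρ : A → A ⊗ B. For algebra morphisms (characters) φ, φ₁, φ₂ : A → K and λ, λ₁, λ₂ : B → K, define φ ← λ = (φ ⊗ λ) ∘ ρ : A → K, the convolution φ₁ ⋆ φ₂ = (φ₁ ⊗ φ₂) ∘ Δ_A, and λ₁ * λ₂ = (λ₁ ⊗ λ₂) ∘ Δ_B. Then φ ← λ is again an algebra morphism from A to K, and the following identities hold: (φ ← λ₁) ← λ₂ = φ ← (λ₁ * λ₂), φ ← (η_K ∘ ε_B) = φ, and (φ₁ ⋆ φ₂) ← λ = (φ₁ ← λ) ⋆ (φ₂ ← λ). (That is, the monoid of characters of B acts on the monoid of characters of A by monoid endomorphisms.) -/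

import Mathlib

open TensorProduct

variable {K : Type*} [Field K]

/-- The action `φ ← λ = (φ ⊗ λ) ∘ ρ` of a character `λ` of `B` on a character `φ`
of `A`, at the level of linear maps. -/
noncomputable def charAct {A B : Type*} [Semiring A] [Semiring B]
    [Algebra K A] [Algebra K B]
    (ρ : A →ₗ[K] A ⊗[K] B) (φ : A →ₗ[K] K) (lam : B →ₗ[K] K) : A →ₗ[K] K :=
  LinearMap.mul' K K ∘ₗ TensorProduct.map φ lam ∘ₗ ρ

/-- The convolution product of two linear forms on a bialgebra. -/
noncomputable def conv {C : Type*} [Semiring C] [Bialgebra K C]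
    (f g : C →ₗ[K] K) : C →ₗ[K] K :=
  LinearMap.mul' K K ∘ₗ TensorProduct.map f g ∘ₗ Coalgebra.comul

/-!
Each identity is the coaction axiom of the same shape composed with the tensor product of the linear
maps involved. For the last one, the two copies of `λ` on `B ⊗ B` are fused by multiplicativity of
`λ`, and commutativity of the target exchanges the two middle factors.
-/

section MulTensor

variable {R S M N P Q : Type*} [CommSemiring R]
  [AddCommMonoid M] [Module R M] [AddCommMonoid N] [Module R N]
  [AddCommMonoid P] [Module R P] [AddCommMonoid Q] [Module R Q]

/-- The linear map `m ⊗ n ↦ f m * g n`, which the paper writes `f ⊗ g` by identifying `K ⊗ K`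
with `K`. Composing it with a coproduct gives the convolution product, and composing it with a
coaction gives the action `←`. -/
noncomputable def mulTensor [Semiring S] [Algebra R S] (f : M →ₗ[R] S) (g : N →ₗ[R] S) :
    M ⊗[R] N →ₗ[R] S :=
  LinearMap.mul' R S ∘ₗ TensorProduct.map f g

section Semiring

variable [Semiring S] [Algebra R S]

@[simp]
theorem mulTensor_tmul (f : M →ₗ[R] S) (g : N →ₗ[R] S) (m : M) (n : N) :
    mulTensor f g (m ⊗ₜ n) = f m * g n :=
  rfl

theorem mulTensor_comp_map (f : P →ₗ[R] S) (g : Q →ₗ[R] S) (u : M →ₗ[R] P) (v : N →ₗ[R] Q) :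
    mulTensor f g ∘ₗ TensorProduct.map u v = mulTensor (f ∘ₗ u) (g ∘ₗ v) := by
  rw [mulTensor, LinearMap.comp_assoc, ← TensorProduct.map_comp, mulTensor]

theorem mulTensor_assoc (f : M →ₗ[R] S) (g : N →ₗ[R] S) (h : P →ₗ[R] S) :
    mulTensor (mulTensor f g) h =
      mulTensor f (mulTensor g h) ∘ₗ (TensorProduct.assoc R M N P).toLinearMap := by
  ext m n p
  simp [mul_assoc]

theorem mulTensor_algebraLinearMap (f : M →ₗ[R] S) :
    mulTensor f (Algebra.linearMap R S) = f ∘ₗ (TensorProduct.rid R M).toLinearMap := by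
  ext m
  simp

end Semiring

theorem mulTensor_mulTensor_mulTensor_comm [CommSemiring S] [Algebra R S] (f : M →ₗ[R] S)
    (g : N →ₗ[R] S) (h : P →ₗ[R] S) (k : Q →ₗ[R] S) :
    mulTensor (mulTensor f h) (mulTensor g k) ∘ₗ
        (TensorProduct.tensorTensorTensorComm R M N P Q).toLinearMap =
      mulTensor (mulTensor f g) (mulTensor h k) := by
  ext m n p q
  simp [mul_mul_mul_comm]

theorem mulTensor_toLinearMap {A B : Type*} [CommSemiring S] [Algebra R S] [Semiring A]
    [Algebra R A] [Semiring B] [Algebra R B] (φ : A →ₐ[R] S) (lam : B →ₐ[R] S) :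
    mulTensor φ.toLinearMap lam.toLinearMap =
      (Algebra.TensorProduct.productMap φ lam).toLinearMap := by
  ext a b
  simp

end MulTensor

section Coaction

variable {R S M B : Type*} [CommSemiring R] [AddCommMonoid M] [Module R M]

theorem mulTensor_comp_coaction_assoc [Semiring S] [Algebra R S] [AddCommMonoid B] [Module R B]
    [CoalgebraStruct R B] {ρ : M →ₗ[R] M ⊗[R] B}
    (hcoassoc :
      (TensorProduct.assoc R M B B).toLinearMap ∘ₗ TensorProduct.map ρ LinearMap.id ∘ₗ ρ =
        TensorProduct.map LinearMap.id Coalgebra.comul ∘ₗ ρ)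
    (f : M →ₗ[R] S) (g₁ g₂ : B →ₗ[R] S) :
    mulTensor (mulTensor f g₁ ∘ₗ ρ) g₂ ∘ₗ ρ =
      mulTensor f (mulTensor g₁ g₂ ∘ₗ Coalgebra.comul) ∘ₗ ρ :=
  calc mulTensor (mulTensor f g₁ ∘ₗ ρ) g₂ ∘ₗ ρ
    _ = mulTensor (mulTensor f g₁) g₂ ∘ₗ TensorProduct.map ρ LinearMap.id ∘ₗ ρ := by
      rw [← LinearMap.comp_assoc, mulTensor_comp_map, LinearMap.comp_id]
    _ = mulTensor f (mulTensor g₁ g₂) ∘ₗ TensorProduct.map LinearMap.id Coalgebra.comul ∘ₗ ρ := by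
      rw [mulTensor_assoc, LinearMap.comp_assoc, hcoassoc]
    _ = mulTensor f (mulTensor g₁ g₂ ∘ₗ Coalgebra.comul) ∘ₗ ρ := by
      rw [← LinearMap.comp_assoc, mulTensor_comp_map, LinearMap.comp_id]

theorem mulTensor_counit_comp_coaction [Semiring S] [Algebra R S] [AddCommMonoid B] [Module R B]
    [CoalgebraStruct R B] {ρ : M →ₗ[R] M ⊗[R] B}
    (hcounit :
      (TensorProduct.rid R M).toLinearMap ∘ₗ
          TensorProduct.map LinearMap.id Coalgebra.counit ∘ₗ ρ =
        LinearMap.id)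
    (f : M →ₗ[R] S) :
    mulTensor f (Algebra.linearMap R S ∘ₗ Coalgebra.counit) ∘ₗ ρ = f :=
  calc mulTensor f (Algebra.linearMap R S ∘ₗ Coalgebra.counit) ∘ₗ ρ
    _ = mulTensor f (Algebra.linearMap R S) ∘ₗ
          TensorProduct.map LinearMap.id Coalgebra.counit ∘ₗ ρ := by
      rw [← LinearMap.comp_assoc, mulTensor_comp_map, LinearMap.comp_id]
    _ = f := by
      rw [mulTensor_algebraLinearMap, LinearMap.comp_assoc, hcounit, LinearMap.comp_id]

theorem mulTensor_convolution_comp_coaction [CommSemiring S] [Algebra R S] [CoalgebraStruct R M]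
    [Semiring B] [Algebra R B] {ρ : M →ₗ[R] M ⊗[R] B}
    (hcomp :
      TensorProduct.map Coalgebra.comul LinearMap.id ∘ₗ ρ =
        TensorProduct.map LinearMap.id (LinearMap.mul' R B) ∘ₗ
          (TensorProduct.tensorTensorTensorComm R M B M B).toLinearMap ∘ₗ
          TensorProduct.map ρ ρ ∘ₗ Coalgebra.comul)
    (f₁ f₂ : M →ₗ[R] S) (g : B →ₐ[R] S) :
    mulTensor (mulTensor f₁ f₂ ∘ₗ Coalgebra.comul) g.toLinearMap ∘ₗ ρ =
      mulTensor (mulTensor f₁ g.toLinearMap ∘ₗ ρ) (mulTensor f₂ g.toLinearMap ∘ₗ ρ) ∘ₗ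
        Coalgebra.comul :=
  calc mulTensor (mulTensor f₁ f₂ ∘ₗ Coalgebra.comul) g.toLinearMap ∘ₗ ρ
    _ = mulTensor (mulTensor f₁ f₂) g.toLinearMap ∘ₗ
          TensorProduct.map Coalgebra.comul LinearMap.id ∘ₗ ρ := by
      rw [← LinearMap.comp_assoc, mulTensor_comp_map, LinearMap.comp_id]
    _ = mulTensor (mulTensor f₁ f₂) (mulTensor g.toLinearMap g.toLinearMap) ∘ₗ
          (TensorProduct.tensorTensorTensorComm R M B M B).toLinearMap ∘ₗ
          TensorProduct.map ρ ρ ∘ₗ Coalgebra.comul := by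
      rw [hcomp, ← LinearMap.comp_assoc, mulTensor_comp_map, LinearMap.comp_id,
        AlgHom.comp_mul', ← mulTensor]
    _ = mulTensor (mulTensor f₁ g.toLinearMap) (mulTensor f₂ g.toLinearMap) ∘ₗ
          TensorProduct.map ρ ρ ∘ₗ Coalgebra.comul := by
      rw [← LinearMap.comp_assoc, mulTensor_mulTensor_mulTensor_comm]
    _ = mulTensor (mulTensor f₁ g.toLinearMap ∘ₗ ρ) (mulTensor f₂ g.toLinearMap ∘ₗ ρ) ∘ₗ
          Coalgebra.comul := by
      rw [← LinearMap.comp_assoc, mulTensor_comp_map]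

end Coaction

theorem characters_monoid_action_general {R S A B : Type*} [CommSemiring R] [CommSemiring S]
    [Algebra R S] [Semiring A] [Algebra R A] [CoalgebraStruct R A] [Semiring B] [Algebra R B]
    [CoalgebraStruct R B]
    (ρ : A →ₐ[R] A ⊗[R] B)
    (hcoassoc :
      (TensorProduct.assoc R A B B).toLinearMap ∘ₗ
          TensorProduct.map ρ.toLinearMap LinearMap.id ∘ₗ ρ.toLinearMap =
        TensorProduct.map LinearMap.id Coalgebra.comul ∘ₗ ρ.toLinearMap)
    (hcounit :
      (TensorProduct.rid R A).toLinearMap ∘ₗ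
          TensorProduct.map LinearMap.id Coalgebra.counit ∘ₗ ρ.toLinearMap =
        LinearMap.id)
    (hcomp :
      TensorProduct.map Coalgebra.comul LinearMap.id ∘ₗ ρ.toLinearMap =
        TensorProduct.map LinearMap.id (LinearMap.mul' R B) ∘ₗ
          (TensorProduct.tensorTensorTensorComm R A B A B).toLinearMap ∘ₗ
          TensorProduct.map ρ.toLinearMap ρ.toLinearMap ∘ₗ Coalgebra.comul) :
    (∀ (φ : A →ₐ[R] S) (lam : B →ₐ[R] S),
      (∀ a b : A,
        (mulTensor φ.toLinearMap lam.toLinearMap ∘ₗ ρ.toLinearMap) (a * b) =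
          (mulTensor φ.toLinearMap lam.toLinearMap ∘ₗ ρ.toLinearMap) a *
            (mulTensor φ.toLinearMap lam.toLinearMap ∘ₗ ρ.toLinearMap) b) ∧
      (mulTensor φ.toLinearMap lam.toLinearMap ∘ₗ ρ.toLinearMap) 1 = 1) ∧
    (∀ (f : A →ₗ[R] S) (g₁ g₂ : B →ₗ[R] S),
      mulTensor (mulTensor f g₁ ∘ₗ ρ.toLinearMap) g₂ ∘ₗ ρ.toLinearMap =
        mulTensor f (mulTensor g₁ g₂ ∘ₗ Coalgebra.comul) ∘ₗ ρ.toLinearMap) ∧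
    (∀ f : A →ₗ[R] S,
      mulTensor f (Algebra.linearMap R S ∘ₗ Coalgebra.counit) ∘ₗ ρ.toLinearMap = f) ∧
    (∀ (f₁ f₂ : A →ₗ[R] S) (lam : B →ₐ[R] S),
      mulTensor (mulTensor f₁ f₂ ∘ₗ Coalgebra.comul) lam.toLinearMap ∘ₗ ρ.toLinearMap =
        mulTensor (mulTensor f₁ lam.toLinearMap ∘ₗ ρ.toLinearMap)
          (mulTensor f₂ lam.toLinearMap ∘ₗ ρ.toLinearMap) ∘ₗ Coalgebra.comul) := by
  refine ⟨fun φ lam => ?_, mulTensor_comp_coaction_assoc hcoassoc,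
    mulTensor_counit_comp_coaction hcounit, mulTensor_convolution_comp_coaction hcomp⟩
  rw [mulTensor_toLinearMap, ← AlgHom.comp_toLinearMap]
  generalize (Algebra.TensorProduct.productMap φ lam).comp ρ = ψ
  exact ⟨map_mul ψ, map_one ψ⟩

/-- If `A` and `B` are bialgebras in cointeraction via `ρ`, then the monoid of
characters of `B` acts on the monoid of characters of `A` by monoid endomorphisms:
`φ ← λ` is again a character, `(φ ← λ₁) ← λ₂ = φ ← (λ₁ * λ₂)`,
`φ ← (η_K ∘ ε_B) = φ`, and `(φ₁ ⋆ φ₂) ← λ = (φ₁ ← λ) ⋆ (φ₂ ← λ)`. -/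
theorem characters_monoid_action
    {A : Type*} [Semiring A] [Bialgebra K A]
    {B : Type*} [Semiring B] [Bialgebra K B]
    (ρ : A →ₐ[K] A ⊗[K] B)
    -- coassociativity of the coaction: `(ρ ⊗ id) ∘ ρ = (id ⊗ Δ_B) ∘ ρ`
    (hcoassoc :
      (TensorProduct.assoc K A B B).toLinearMap ∘ₗ
          (TensorProduct.map ρ.toLinearMap LinearMap.id) ∘ₗ ρ.toLinearMap =
        (TensorProduct.map LinearMap.id Coalgebra.comul) ∘ₗ ρ.toLinearMap)
    -- counitality of the coaction: `(id ⊗ ε_B) ∘ ρ = id`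
    (hcounit :
      (TensorProduct.rid K A).toLinearMap ∘ₗ
          (TensorProduct.map LinearMap.id Coalgebra.counit) ∘ₗ ρ.toLinearMap =
        LinearMap.id)
    -- compatibility with `Δ_A`: `(Δ_A ⊗ id_B) ∘ ρ = m³₂₄ ∘ (ρ ⊗ ρ) ∘ Δ_A`
    (hcomp :
      (TensorProduct.map Coalgebra.comul LinearMap.id) ∘ₗ ρ.toLinearMap =
        (TensorProduct.map LinearMap.id (LinearMap.mul' K B)) ∘ₗ
          (TensorProduct.tensorTensorTensorComm K A B A B).toLinearMap ∘ₗ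
          (TensorProduct.map ρ.toLinearMap ρ.toLinearMap) ∘ₗ Coalgebra.comul)
    -- compatibility with `ε_A`: `(ε_A ⊗ id_B)(ρ a) = ε_A(a) 1_B`
    (hcounitA :
      (TensorProduct.lid K B).toLinearMap ∘ₗ
          (TensorProduct.map Coalgebra.counit LinearMap.id) ∘ₗ ρ.toLinearMap =
        (Algebra.linearMap K B) ∘ₗ Coalgebra.counit) :
    -- `φ ← λ` is again an algebra morphism from `A` to `K`
    (∀ (φ : A →ₐ[K] K) (lam : B →ₐ[K] K),
      (∀ a b : A,
        charAct ρ.toLinearMap φ.toLinearMap lam.toLinearMap (a * b) =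
          charAct ρ.toLinearMap φ.toLinearMap lam.toLinearMap a *
          charAct ρ.toLinearMap φ.toLinearMap lam.toLinearMap b) ∧
      charAct ρ.toLinearMap φ.toLinearMap lam.toLinearMap 1 = 1) ∧
    -- `(φ ← λ₁) ← λ₂ = φ ← (λ₁ * λ₂)`
    (∀ (φ : A →ₐ[K] K) (lam₁ lam₂ : B →ₐ[K] K),
      charAct ρ.toLinearMap
          (charAct ρ.toLinearMap φ.toLinearMap lam₁.toLinearMap)
          lam₂.toLinearMap =
        charAct ρ.toLinearMap φ.toLinearMap
          (conv lam₁.toLinearMap lam₂.toLinearMap)) ∧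
    -- `φ ← (η_K ∘ ε_B) = φ`
    (∀ φ : A →ₐ[K] K,
      charAct ρ.toLinearMap φ.toLinearMap (Coalgebra.counit (R := K) (A := B)) =
        φ.toLinearMap) ∧
    -- `(φ₁ ⋆ φ₂) ← λ = (φ₁ ← λ) ⋆ (φ₂ ← λ)`
    (∀ (φ₁ φ₂ : A →ₐ[K] K) (lam : B →ₐ[K] K),
      charAct ρ.toLinearMap (conv φ₁.toLinearMap φ₂.toLinearMap)
          lam.toLinearMap =
        conv (charAct ρ.toLinearMap φ₁.toLinearMap lam.toLinearMap)
          (charAct ρ.toLinearMap φ₂.toLinearMap lam.toLinearMap)) := by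
  have ⟨hchar, hassoc, hone, hmul⟩ :=
    characters_monoid_action_general (S := K) ρ hcoassoc hcounit hcomp
  -- `Algebra.linearMap K K ∘ₗ counit` is definitionally `counit`.
  exact ⟨hchar, fun φ _ _ => hassoc φ _ _, fun φ => hone φ, fun φ₁ φ₂ => hmul φ₁ φ₂⟩
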